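/- Let Y be a finite set, ε ∈ (0,1), g a probability distribution on Y, and let Π = B(g,ε) be the partition of Y into bins B_i = {y : g(y) ∈ ((1−ε)^{i+1}, (1−ε)^i]} for i = 0,1,2,… together with B_0' = {y : g(y) = 0}. Then ‖g^Π − g‖_TV ≤ ε, where g^Π is the Π-coarsening of g. -/

import Mathlib

open Finset

/-- A partition of a finite type `Y`, given as the map sending each element to its block. -/
def IsBlockFun {Y : Type*} [Fintype Y] (π : Y → Finset Y) : Prop :=
  (∀ y, y ∈ π y) ∧ ∀ y z, z ∈ π y → π z = π y

/-- The `π`-coarsening of `p`: each element gets the average of `p` over its block. -/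
noncomputable def coarsen {Y : Type*} [Fintype Y] (p : Y → ℝ) (π : Y → Finset Y) (y : Y) : ℝ :=
  (∑ z ∈ π y, p z) / (π y).card

open scoped Classical

/-- The fixed-width log-probability bin (block) of  under  with parameter . -/
noncomputable def binBlock {Y : Type*} [Fintype Y] (g : Y → ℝ) (ε : ℝ) (y : Y) : Finset Y :=
  Finset.univ.filter (fun z =>
    (g y = 0 ∧ g z = 0) ∨ ∃ i : ℕ, g y ∈ Set.Ioc ((1-ε)^(i+1)) ((1-ε)^i)
      ∧ g z ∈ Set.Ioc ((1-ε)^(i+1)) ((1-ε)^i))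

/-
Two values of the same bin differ by a factor of at most `1 - ε`, hence so do a value and the
average over its bin: `(1 - ε) g^Π ≤ g`, that is, `g^Π - g ≤ ε g^Π`. Coarsening preserves total
mass, so summing over `Y` bounds the positive part of `g^Π - g` by `ε`.
-/

section Coarsening

open scoped BigOperators

variable {Y : Type*} [Fintype Y] {π : Y → Finset Y}

theorem isBlockFun_of_mem_iff {R : Y → Y → Prop} (hR : Equivalence R)
    (hπ : ∀ y z, z ∈ π y ↔ R y z) : IsBlockFun π := by
  refine ⟨fun y => (hπ y y).2 (hR.refl y), fun y z hz => ?_⟩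
  have hyz : R y z := (hπ y z).1 hz
  ext w
  rw [hπ, hπ]
  exact ⟨hR.trans hyz, hR.trans (hR.symm hyz)⟩

theorem IsBlockFun.mem_comm (hπ : IsBlockFun π) {y z : Y} : z ∈ π y ↔ y ∈ π z :=
  ⟨fun hz => hπ.2 y z hz ▸ hπ.1 y, fun hy => hπ.2 z y hy ▸ hπ.1 z⟩

theorem IsBlockFun.nonempty (hπ : IsBlockFun π) (y : Y) : (π y).Nonempty :=
  ⟨y, hπ.1 y⟩

theorem IsBlockFun.sum_coarsen (hπ : IsBlockFun π) (p : Y → ℝ) :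
    ∑ y, coarsen p π y = ∑ y, p y := by
  have sum_block (z : Y) : ∑ y ∈ π z, p z / (π y).card = p z := by
    have hcard : ((π z).card : ℝ) ≠ 0 := Nat.cast_ne_zero.2 (hπ.nonempty z).card_ne_zero
    calc ∑ y ∈ π z, p z / (π y).card
        = ∑ _y ∈ π z, p z / (π z).card := sum_congr rfl fun y hy => by rw [hπ.2 z y hy]
      _ = p z := by rw [sum_const, nsmul_eq_mul, mul_div_cancel₀ _ hcard]
  calc ∑ y, coarsen p π y
      = ∑ y, ∑ z ∈ π y, p z / (π y).card := sum_congr rfl fun _ _ => sum_div _ _ _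
    _ = ∑ z, ∑ y ∈ π z, p z / (π y).card := sum_comm' fun y z => by simp [hπ.mem_comm]
    _ = ∑ z, p z := sum_congr rfl fun z _ => sum_block z

theorem mul_coarsen (c : ℝ) (p : Y → ℝ) (π : Y → Finset Y) (y : Y) :
    c * coarsen p π y = 𝔼 z ∈ π y, c * p z := by
  rw [coarsen, ← expect_eq_sum_div_card, mul_expect]

theorem IsBlockFun.sum_max_coarsen_sub_le (hπ : IsBlockFun π) {p : Y → ℝ} {ε : ℝ}
    (hp : ∀ y, ∀ z ∈ π y, (1 - ε) * p z ≤ p y) :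
    ∑ y, max (coarsen p π y - p y) 0 ≤ ε * ∑ y, p y := by
  have coarsen_le (y : Y) : (1 - ε) * coarsen p π y ≤ p y :=
    mul_coarsen (1 - ε) p π y ▸ expect_le (hπ.nonempty y) (hp y)
  have eps_mul_nonneg (y : Y) : 0 ≤ ε * p y := by linarith [hp y y (hπ.1 y)]
  have mul_coarsen_nonneg (y : Y) : 0 ≤ ε * coarsen p π y :=
    mul_coarsen ε p π y ▸ expect_nonneg fun z _ => eps_mul_nonneg z
  calc ∑ y, max (coarsen p π y - p y) 0
      ≤ ∑ y, ε * coarsen p π y :=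
        sum_le_sum fun y _ => max_le (by linarith [coarsen_le y]) (mul_coarsen_nonneg y)
    _ = ε * ∑ y, p y := by rw [← mul_sum, hπ.sum_coarsen]

end Coarsening

section Bins

/-- Two reals lie in a common bin, for the bins `{0}` and `(r ^ (i + 1), r ^ i]`, `i : ℕ`. At
`r = 1 - ε` this relation between values of `g` has the blocks `binBlock g ε`. For `0 < r < 1` the
bins cover only `[0, 1]`, and a number outside that interval is not even related to itself. -/
def SameBin (r a b : ℝ) : Prop :=
  (a = 0 ∧ b = 0) ∨
    ∃ i : ℕ, a ∈ Set.Ioc (r ^ (i + 1)) (r ^ i) ∧ b ∈ Set.Ioc (r ^ (i + 1)) (r ^ i)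

variable {r a b c : ℝ}

theorem eq_of_mem_Ioc_pow (hr0 : 0 ≤ r) (hr1 : r ≤ 1) {i j : ℕ}
    (hi : a ∈ Set.Ioc (r ^ (i + 1)) (r ^ i)) (hj : a ∈ Set.Ioc (r ^ (j + 1)) (r ^ j)) : i = j :=
  (pow_right_anti₀ hr0 hr1).pairwise_disjoint_on_Ioc_succ.eq
    (Set.not_disjoint_iff.2 ⟨a, hi, hj⟩)

theorem sameBin_self (hr0 : 0 < r) (hr1 : r < 1) (ha : a ∈ Set.Icc 0 1) : SameBin r a a := by
  rcases ha.1.eq_or_lt with rfl | ha_pos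
  · exact .inl ⟨rfl, rfl⟩
  · obtain ⟨i, hi⟩ := exists_nat_pow_near_of_lt_one ha_pos ha.2 hr0 hr1
    exact .inr ⟨i, hi, hi⟩

theorem SameBin.symm (h : SameBin r a b) : SameBin r b a :=
  h.imp And.symm fun ⟨i, ha, hb⟩ => ⟨i, hb, ha⟩

theorem SameBin.trans (hr0 : 0 ≤ r) (hr1 : r ≤ 1) (hab : SameBin r a b) (hbc : SameBin r b c) :
    SameBin r a c := by
  have zero_notMem (i : ℕ) : (0 : ℝ) ∉ Set.Ioc (r ^ (i + 1)) (r ^ i) :=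
    fun h => h.1.not_ge (pow_nonneg hr0 _)
  rcases hab with ⟨ha, rfl⟩ | ⟨i, ha, hb⟩ <;> rcases hbc with ⟨hb', hc⟩ | ⟨j, hb', hc⟩
  · exact .inl ⟨ha, hc⟩
  · exact absurd hb' (zero_notMem j)
  · exact absurd (hb' ▸ hb) (zero_notMem i)
  · obtain rfl := eq_of_mem_Ioc_pow hr0 hr1 hb hb'
    exact .inr ⟨i, ha, hc⟩

theorem SameBin.mul_le (hr0 : 0 ≤ r) (h : SameBin r a b) : r * b ≤ a := by
  rcases h with ⟨rfl, rfl⟩ | ⟨i, ha, hb⟩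
  · exact (mul_zero r).le
  · calc r * b ≤ r * r ^ i := mul_le_mul_of_nonneg_left hb.2 hr0
      _ = r ^ (i + 1) := (pow_succ' r i).symm
      _ ≤ a := ha.1.le

variable {Y : Type*} [Fintype Y] {g : Y → ℝ} {ε : ℝ}

theorem mem_binBlock {y z : Y} : z ∈ binBlock g ε y ↔ SameBin (1 - ε) (g y) (g z) :=
  mem_filter_univ z

theorem isBlockFun_binBlock (hε : ε ∈ Set.Ioo (0 : ℝ) 1) (hg : ∀ y, g y ∈ Set.Icc 0 1) :
    IsBlockFun (binBlock g ε) := by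
  have hr0 : 0 < 1 - ε := sub_pos.2 hε.2
  have hr1 : 1 - ε < 1 := sub_lt_self 1 hε.1
  have sameBin_equivalence : Equivalence fun y z => SameBin (1 - ε) (g y) (g z) :=
    ⟨fun y => sameBin_self hr0 hr1 (hg y), SameBin.symm, SameBin.trans hr0.le hr1.le⟩
  exact isBlockFun_of_mem_iff sameBin_equivalence fun _ _ => mem_binBlock

end Bins

theorem stmt12_general {Y : Type*} [Fintype Y] (ε : ℝ) (hε : ε ∈ Set.Ioo (0 : ℝ) 1)
    (g : Y → ℝ) (hg : ∀ y, g y ∈ Set.Icc 0 1) :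
    ∑ y, max (coarsen g (binBlock g ε) y - g y) 0 ≤ ε * ∑ y, g y :=
  (isBlockFun_binBlock hε hg).sum_max_coarsen_sub_le fun _ _ hz =>
    (mem_binBlock.1 hz).mul_le (sub_nonneg.2 hε.2.le)

theorem stmt12 {Y : Type*} [Fintype Y] (ε : ℝ) (hε : ε ∈ Set.Ioo (0:ℝ) 1)
    (g : Y → ℝ) (hg : ∀ y, 0 ≤ g y) (hg1 : ∑ y, g y = 1) :
    ∑ y, max (coarsen g (binBlock g ε) y - g y) 0 ≤ ε := by
  have hle (y : Y) : g y ≤ 1 := hg1 ▸ single_le_sum (fun z _ => hg z) (mem_univ y)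
  simpa only [hg1, mul_one] using stmt12_general ε hε g fun y => ⟨hg y, hle y⟩
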